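/- Let R be a poset function on a nonempty finite set V satisfying axioms (p) and (hy), and let G_R be its underlying digraph. Then G_R is a rooted directed forest (a directed acyclic graph in which every vertex has at most one incoming edge), and R equals the all-paths transit function of G_R: for all u,v ∈ V, R(u,v) is the set of vertices lying on some directed path from u to v in G_R. -/

import Mathlib

/-- A directed path from `u` to `v` w.r.t. the edge relation `E`: a nonempty list of
pairwise distinct vertices starting at `u`, ending at `v`, with every consecutive pair
an edge. -/
def IsDiPath {V : Type*} (E : V → V → Prop) (u v : V) (p : List V) : Prop :=
  p.Chain' E ∧ p.Nodup ∧ p.head? = some u ∧ p.getLast? = some v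

/-- The edge relation of the underlying digraph `G_R` of `R`. -/
def underlyingEdge {V : Type*} (R : V → V → Set V) (x y : V) : Prop :=
  x ≠ y ∧ R x y = {x, y}

/-- The all-paths transit function of the digraph with edge relation `E`. -/
def allPaths {V : Type*} (E : V → V → Prop) (u v : V) : Set V :=
  {x : V | ∃ p : List V, IsDiPath E u v p ∧ x ∈ p}

/-!
A poset function `R` is the interval function `Set.Icc` of the partial order
`u ≤ v ↔ R u v ≠ ∅`, so its underlying digraph is the Hasse diagram `⋖` of that order, which is
acyclic. When all intervals are finite, `≤` is the reflexive transitive closure of `⋖`; in an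
acyclic digraph every walk is a path, so `Set.Icc u v` consists of the vertices on paths from `u`
to `v`. Finally, by (hy), of two in-neighbours of `v` one lies in the two-element interval
from the other to `v`, so they coincide.
-/

section Paths

open Relation

variable {V : Type*} {E : V → V → Prop} {u v x : V} {p : List V}

theorem IsDiPath.reflTransGen_of_mem (hp : IsDiPath E u v p) (hx : x ∈ p) :
    ReflTransGen E u x ∧ ReflTransGen E x v := by
  obtain ⟨hchain, -, hhead, hlast⟩ := hp
  have hreach : p.Pairwise (ReflTransGen E) := (hchain.imp fun _ _ => .single).pairwise
  have hne : p ≠ [] := List.ne_nil_of_mem hx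
  have hu : p.head hne = u := (List.head_eq_iff_head?_eq_some hne).2 hhead
  have hv : p.getLast hne = v := (List.getLast_eq_iff_getLast?_eq_some hne).2 hlast
  exact ⟨hu ▸ hreach.rel_head hx, hv ▸ hreach.rel_getLast hx⟩

theorem IsDiPath.reflTransGen (hp : IsDiPath E u v p) : ReflTransGen E u v :=
  (hp.reflTransGen_of_mem (List.mem_of_getLast? hp.2.2.2)).1

theorem exists_isChain_mem_of_reflTransGen (hux : ReflTransGen E u x) (hxv : ReflTransGen E x v) :
    ∃ l : List V, (u :: l).IsChain E ∧ (u :: l).getLast? = some v ∧ x ∈ u :: l := by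
  induction hux using ReflTransGen.head_induction_on with
  | refl =>
    obtain ⟨l, hchain, hlast⟩ := List.exists_isChain_cons_of_relationReflTransGen hxv
    exact ⟨l, hchain, (List.getLast_eq_iff_getLast?_eq_some _).1 hlast, List.mem_cons_self⟩
  | @head a b hab _ ih =>
    obtain ⟨l, hchain, hlast, hmem⟩ := ih
    exact ⟨b :: l, hchain.cons_cons hab, List.getLast?_cons_cons.trans hlast,
      List.mem_cons_of_mem a hmem⟩

variable [Std.Irrefl (TransGen E)]

theorem nodup_of_isChain_of_irrefl_transGen (hp : p.IsChain E) : p.Nodup :=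
  have hreach : p.Pairwise (TransGen E) := (hp.imp fun _ _ => .single).pairwise
  hreach.imp ne_of_irrefl

theorem IsDiPath.not_edge_last_head (hp : IsDiPath E u v p) : ¬ E v u := fun hvu =>
  irrefl_of (TransGen E) u (.tail' hp.reflTransGen hvu)

theorem mem_allPaths_iff_reflTransGen :
    x ∈ allPaths E u v ↔ ReflTransGen E u x ∧ ReflTransGen E x v := by
  constructor
  · rintro ⟨p, hp, hx⟩
    exact hp.reflTransGen_of_mem hx
  · rintro ⟨hux, hxv⟩
    obtain ⟨l, hchain, hlast, hmem⟩ := exists_isChain_mem_of_reflTransGen hux hxv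
    exact ⟨u :: l, ⟨hchain, nodup_of_isChain_of_irrefl_transGen hchain, rfl, hlast⟩, hmem⟩

end Paths

section HasseDiagram

open Relation

variable {V : Type*}

theorem underlyingEdge_Icc_eq_covBy [PartialOrder V] :
    underlyingEdge (Set.Icc : V → V → Set V) = (· ⋖ ·) := by
  ext x y
  constructor
  · rintro ⟨hne, hIcc⟩
    have hxy : x ≤ y := Set.nonempty_Icc.1 (hIcc ▸ Set.insert_nonempty x {y})
    refine ⟨hxy.lt_of_ne hne, fun z hxz hzy => ?_⟩
    have hz : z ∈ ({x, y} : Set V) := hIcc ▸ ⟨hxz.le, hzy.le⟩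
    exact hz.elim hxz.ne' hzy.ne
  · exact fun h => ⟨h.ne, h.Icc_eq⟩

instance irrefl_transGen_covBy [Preorder V] : Std.Irrefl (TransGen ((· ⋖ ·) : V → V → Prop)) where
  irrefl x hx :=
    have hlt : TransGen (· ⋖ ·) ≤ ((· < ·) : V → V → Prop) := transGen_minimal fun _ _ => CovBy.lt
    lt_irrefl x (hlt x x hx)

theorem allPaths_covBy_eq_Icc [PartialOrder V] [LocallyFiniteOrder V] (u v : V) :
    allPaths (· ⋖ ·) u v = Set.Icc u v := by
  ext x
  rw [mem_allPaths_iff_reflTransGen, ← le_iff_reflTransGen_covBy, ← le_iff_reflTransGen_covBy,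
    Set.mem_Icc]

end HasseDiagram

section TransitFunction

variable {V : Type*} {R : V → V → Set V}

/-- `R` is a poset function: a directed transit function, i.e. (t0), (t1) and (t3), that moreover
satisfies (t2a), (tr1) and (tr2). The fields carry the names of the axioms. -/
structure IsPosetFunction (R : V → V → Set V) : Prop where
  t0 : ∀ u v w, R u w ≠ ∅ → R w v ≠ ∅ → R u v ≠ ∅
  t1 : ∀ u v, R u v ≠ ∅ → u ∈ R u v ∧ v ∈ R u v
  t3 : ∀ u, R u u = {u}
  t2a : ∀ u v, R u v ≠ ∅ → u ≠ v → R v u = ∅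
  tr1 : ∀ u v w, u ≠ v → R u w ≠ ∅ → R w v ≠ ∅ → R u w ∪ R w v ⊆ R u v
  tr2 : ∀ u v w, u ≠ v → (R u w = ∅ ∨ R w v = ∅) → w ∉ R u v

/-- Axiom (hy): any two elements that reach `v` are comparable, one lying between the other
and `v`. -/
def AxiomHy (R : V → V → Set V) : Prop :=
  ∀ x y v, R x v ≠ ∅ → R y v ≠ ∅ → x ∈ R y v ∨ y ∈ R x v

namespace IsPosetFunction

/-- The partial order of a poset function `R`, in which `u ≤ v` means `R u v ≠ ∅`. -/
abbrev partialOrder (hR : IsPosetFunction R) : PartialOrder V where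
  le u v := R u v ≠ ∅
  le_refl u := by simp [hR.t3]
  le_trans u w v := hR.t0 u v w
  le_antisymm u v huv hvu := by_contra fun hne => hvu (hR.t2a u v huv hne)

theorem mem_iff (hR : IsPosetFunction R) {u v w : V} :
    w ∈ R u v ↔ R u w ≠ ∅ ∧ R w v ≠ ∅ := by
  obtain rfl | huv := eq_or_ne u v
  · constructor
    · intro hw
      obtain rfl : w = u := by rwa [hR.t3] at hw
      exact ⟨Set.nonempty_iff_ne_empty.1 ⟨w, hw⟩, Set.nonempty_iff_ne_empty.1 ⟨w, hw⟩⟩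
    · rintro ⟨huw, hwu⟩
      obtain rfl : w = u := by_contra fun hne => huw (hR.t2a w u hwu hne)
      exact (hR.t1 w w hwu).1
  · constructor
    · exact fun hw => not_or.1 fun hempty => hR.tr2 u v w huv hempty hw
    · exact fun ⟨huw, hwv⟩ => hR.tr1 u v w huv huw hwv (Or.inl (hR.t1 u w huw).2)

theorem exists_partialOrder_eq_Icc (hR : IsPosetFunction R) :
    ∃ _ : PartialOrder V, R = Set.Icc :=
  ⟨hR.partialOrder, funext₂ fun _ _ => Set.ext fun _ => hR.mem_iff⟩

end IsPosetFunction

theorem AxiomHy.eq_of_underlyingEdge (hR : AxiomHy R) {v x y : V} (hxv : underlyingEdge R x v)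
    (hyv : underlyingEdge R y v) : x = y := by
  obtain ⟨hxne, hxR⟩ := hxv
  obtain ⟨hyne, hyR⟩ := hyv
  have hcomparable : x ∈ R y v ∨ y ∈ R x v :=
    hR x y v (hxR ▸ (Set.insert_nonempty x {v}).ne_empty)
      (hyR ▸ (Set.insert_nonempty y {v}).ne_empty)
  rw [hxR, hyR] at hcomparable
  rcases hcomparable with hx | hy
  · exact hx.resolve_right hxne
  · exact (hy.resolve_right hyne).symm

end TransitFunction

theorem stmt_12_general {V : Type*} {R : V → V → Set V} (hR : IsPosetFunction R)
    (hfin : ∀ u v, (R u v).Finite) (hhy : AxiomHy R) :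
    (∀ (u v : V) (p : List V),
        IsDiPath (underlyingEdge R) u v p → ¬ underlyingEdge R v u) ∧
    (∀ v x y : V, underlyingEdge R x v → underlyingEdge R y v → x = y) ∧
    (∀ u v, R u v = allPaths (underlyingEdge R) u v) := by
  obtain ⟨_, rfl⟩ := hR.exists_partialOrder_eq_Icc
  let := LocallyFiniteOrder.ofFiniteIcc hfin
  refine ⟨?_, fun v x y => hhy.eq_of_underlyingEdge, ?_⟩
  · rw [underlyingEdge_Icc_eq_covBy]
    exact fun u v p hp => hp.not_edge_last_head
  · rw [underlyingEdge_Icc_eq_covBy]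
    exact fun u v => (allPaths_covBy_eq_Icc u v).symm

/-- Let `R` be a poset function on a nonempty finite set satisfying (p)
and (hy). Then the underlying digraph `G_R` is a rooted directed forest (a DAG in which
every vertex has at most one incoming edge), and `R` equals the all-paths transit
function of `G_R`. -/
theorem stmt_12 {V : Type*} [Fintype V] [Nonempty V]
    (R : V → V → Set V)
    -- (t0)
    (t0 : ∀ u v w, R u w ≠ ∅ → R w v ≠ ∅ → R u v ≠ ∅)
    -- (t1)
    (t1 : ∀ u v, R u v ≠ ∅ → u ∈ R u v ∧ v ∈ R u v)
    -- (t3)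
    (t3 : ∀ u, R u u = {u})
    -- (t2a)
    (t2a : ∀ u v, R u v ≠ ∅ → u ≠ v → R v u = ∅)
    -- (tr1)
    (tr1 : ∀ u v w, u ≠ v → R u w ≠ ∅ → R w v ≠ ∅ → R u w ∪ R w v ⊆ R u v)
    -- (tr2)
    (tr2 : ∀ u v w, u ≠ v → (R u w = ∅ ∨ R w v = ∅) → w ∉ R u v)
    -- (p)
    (axp : ∀ u v w, w ∈ R u v → R u w ∪ R w v = R u v)
    -- (hy)
    (axhy : ∀ x y v, R x v ≠ ∅ → R y v ≠ ∅ → x ∈ R y v ∨ y ∈ R x v) :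
    -- G_R is acyclic
    (∀ (u v : V) (p : List V),
        IsDiPath (underlyingEdge R) u v p → ¬ underlyingEdge R v u) ∧
    -- every vertex of G_R has in-degree at most one
    (∀ v x y : V, underlyingEdge R x v → underlyingEdge R y v → x = y) ∧
    -- R = A_{G_R}
    (∀ u v, R u v = allPaths (underlyingEdge R) u v) :=
  stmt_12_general ⟨t0, t1, t3, t2a, tr1, tr2⟩ (fun _ _ => Set.toFinite _) axhy
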